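/- Derivative of the projected entropy along the flow: if h : [0,∞) × 𝕋^d × ℝ^d → ℝ is smooth, bounded above and below by positive constants, has all partial derivatives bounded, satisfies ∫ h(t,·) dμ = 1 for all t, and solves ∂_t h + v·∇_x h = λ(Πh − h) with λ > 0, then for all t ≥ 0, (d/dt) ∫_{𝕋^d} Πh_t log(Πh_t) dx = − ∫_{𝕋^d} log(Πh_t(x)) (∇_x · U_t)(x) dx, where U_t(x) = ∫_{ℝ^d} v h_t(x,v) ℳ(v) dv. -/

import Mathlib

/-!
Averaging the kinetic equation against the Gaussian kills the relaxation term and leaves the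
continuity equation `∂_t Πh + ∇_x · U = 0`. Since `Πh` stays in a compact subinterval of `(0, ∞)`
and is Lipschitz in time, dominated convergence differentiates the entropy of `ρ = Πh` under the
integral: `d/dt ∫ ρ log ρ = ∫ (log ρ + 1) ∂_t ρ`. The constant `1` contributes the derivative of
the total mass, which vanishes.
-/

open MeasureTheory Real Filter

noncomputable section

/-- The standard Gaussian density `ℳ(v) = (2π)^{-d/2} exp(-|v|²/2)` on `ℝ^d`. -/
def gauss (d : ℕ) (v : Fin d → ℝ) : ℝ :=
  (2 * Real.pi) ^ (-(d : ℝ) / 2) * Real.exp (-(∑ i, v i ^ 2) / 2)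

/-- Fundamental domain `[0,1]^d` of the torus `𝕋^d`; the normalized Lebesgue measure on
the torus is the restriction of Lebesgue measure to this cube. -/
def cube (d : ℕ) : Set (Fin d → ℝ) := Set.Icc 0 1

/-- A function of `(x,v)` represents a function on `𝕋^d × ℝ^d` iff it is `ℤ^d`-periodic in `x`. -/
def IsPeriodic (d : ℕ) (f : (Fin d → ℝ) → (Fin d → ℝ) → ℝ) : Prop :=
  ∀ (x v : Fin d → ℝ) (k : Fin d → ℤ), f (x + fun i => (k i : ℝ)) v = f x v

/-- The projection `Πf(x) = ∫ f(x,u) ℳ(u) du`. -/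
def proj (d : ℕ) (f : (Fin d → ℝ) → (Fin d → ℝ) → ℝ) (x : Fin d → ℝ) : ℝ :=
  ∫ u, f x u * gauss d u

/-- Euclidean dot product on `ℝ^d`. -/
def dotp (d : ℕ) (a b : Fin d → ℝ) : ℝ := ∑ i, a i * b i

/-- Squared Euclidean norm on `ℝ^d`. -/
def nsq (d : ℕ) (a : Fin d → ℝ) : ℝ := ∑ i, a i ^ 2

/-- Gradient in the `x` variable. -/
def gradx (d : ℕ) (f : (Fin d → ℝ) → (Fin d → ℝ) → ℝ) (x v : Fin d → ℝ) : Fin d → ℝ :=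
  fun i => fderiv ℝ (fun y => f y v) x (Pi.single i 1)

/-- Gradient in the `v` variable. -/
def gradv (d : ℕ) (f : (Fin d → ℝ) → (Fin d → ℝ) → ℝ) (x v : Fin d → ℝ) : Fin d → ℝ :=
  fun i => fderiv ℝ (fun w => f x w) v (Pi.single i 1)

/-- Gradient of a function of `x` only. -/
def grad1 (d : ℕ) (g : (Fin d → ℝ) → ℝ) (x : Fin d → ℝ) : Fin d → ℝ :=
  fun i => fderiv ℝ g x (Pi.single i 1)

/-- Laplacian in the `v` variable. -/
def lapv (d : ℕ) (f : (Fin d → ℝ) → (Fin d → ℝ) → ℝ) (x v : Fin d → ℝ) : ℝ :=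
  ∑ i, fderiv ℝ (fun w => gradv d f x w i) v (Pi.single i 1)

/-- Integral against `μ = ℳ(v) dv dx` on `𝕋^d × ℝ^d`. -/
def intMu (d : ℕ) (F : (Fin d → ℝ) → (Fin d → ℝ) → ℝ) : ℝ :=
  ∫ x in cube d, ∫ v, F x v * gauss d v

/-- `I^X(h) = ∫ |∇_x h|²/h dμ`. -/
def IX (d : ℕ) (h : (Fin d → ℝ) → (Fin d → ℝ) → ℝ) : ℝ :=
  intMu d fun x v => nsq d (gradx d h x v) / h x v

/-- `I^V(h) = ∫ |∇_v h|²/h dμ`. -/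
def IV (d : ℕ) (h : (Fin d → ℝ) → (Fin d → ℝ) → ℝ) : ℝ :=
  intMu d fun x v => nsq d (gradv d h x v) / h x v

/-- `I^M(h) = ∫ (∇_x h · ∇_v h)/h dμ`. -/
def IM (d : ℕ) (h : (Fin d → ℝ) → (Fin d → ℝ) → ℝ) : ℝ :=
  intMu d fun x v => dotp d (gradx d h x v) (gradv d h x v) / h x v

/-- The full Fisher information `I(h) = ∫ |∇_{x,v} h|²/h dμ`. -/
def Ifull (d : ℕ) (h : (Fin d → ℝ) → (Fin d → ℝ) → ℝ) : ℝ :=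
  intMu d fun x v => (nsq d (gradx d h x v) + nsq d (gradv d h x v)) / h x v

/-- `I^{ΠX}(h) = ∫_{𝕋^d} |∇_x Πh|²/Πh dx`. -/
def IPiX (d : ℕ) (h : (Fin d → ℝ) → (Fin d → ℝ) → ℝ) : ℝ :=
  ∫ x in cube d, nsq d (grad1 d (proj d h) x) / proj d h x

/-- `I^{ΠX/X}(h) = ∫ (|∇_x(Πh/h)|²/(Πh/h)) h dμ`. -/
def IPiXX (d : ℕ) (h : (Fin d → ℝ) → (Fin d → ℝ) → ℝ) : ℝ :=
  intMu d fun x v =>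
    nsq d (gradx d (fun y w => proj d h y / h y w) x v) / (proj d h x / h x v) * h x v

/-- `I^{ΠV/V}(h) = ∫ (|∇_v h|²/h)(Πh/h) dμ`. -/
def IPiVV (d : ℕ) (h : (Fin d → ℝ) → (Fin d → ℝ) → ℝ) : ℝ :=
  intMu d fun x v => nsq d (gradv d h x v) / h x v * (proj d h x / h x v)

/-- The relative entropy `H(h) = ∫ h log h dμ`. -/
def Hent (d : ℕ) (h : (Fin d → ℝ) → (Fin d → ℝ) → ℝ) : ℝ :=
  intMu d fun x v => h x v * Real.log (h x v)

/-- The projected entropy `H_Π(h) = ∫_{𝕋^d} Πh log Πh dx`. -/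
def HPi (d : ℕ) (h : (Fin d → ℝ) → (Fin d → ℝ) → ℝ) : ℝ :=
  ∫ x in cube d, proj d h x * Real.log (proj d h x)

/-- The local average speed `U(x) = ∫ v h(x,v) ℳ(v) dv`. -/
def Uvec (d : ℕ) (h : (Fin d → ℝ) → (Fin d → ℝ) → ℝ) (x : Fin d → ℝ) : Fin d → ℝ :=
  fun i => ∫ v, v i * h x v * gauss d v

/-- The divergence `∇_x · U`. -/
def divU (d : ℕ) (h : (Fin d → ℝ) → (Fin d → ℝ) → ℝ) (x : Fin d → ℝ) : ℝ :=
  ∑ i, fderiv ℝ (fun y => Uvec d h y i) x (Pi.single i 1)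

/-- The `p`-entropy `H^{(p)}(h) = ∫ (h^p - h)/(p(p-1)) dμ`. -/
def Hp (d : ℕ) (p : ℝ) (h : (Fin d → ℝ) → (Fin d → ℝ) → ℝ) : ℝ :=
  intMu d fun x v => (h x v ^ p - h x v) / (p * (p - 1))

/-- The projected `p`-entropy `H_Π^{(p)}(h) = ∫_{𝕋^d} ((Πh)^p - Πh)/(p(p-1)) dx`. -/
def HpPi (d : ℕ) (p : ℝ) (h : (Fin d → ℝ) → (Fin d → ℝ) → ℝ) : ℝ :=
  ∫ x in cube d, ((proj d h x) ^ p - proj d h x) / (p * (p - 1))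

/-- The `p`-Fisher information `I^{(p)}(h) = ∫ h^{p-2} |∇_{x,v} h|² dμ`. -/
def Ipfull (d : ℕ) (p : ℝ) (h : (Fin d → ℝ) → (Fin d → ℝ) → ℝ) : ℝ :=
  intMu d fun x v => h x v ^ (p - 2) * (nsq d (gradx d h x v) + nsq d (gradv d h x v))

/-- The spatial `p`-Fisher information `∫ h^{p-2} |∇_x h|² dμ`. -/
def IpX (d : ℕ) (p : ℝ) (h : (Fin d → ℝ) → (Fin d → ℝ) → ℝ) : ℝ :=
  intMu d fun x v => h x v ^ (p - 2) * nsq d (gradx d h x v)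

/-- Regularity of a time-dependent `h`: smooth, periodic in `x`, bounded above and below by
positive constants, with all partial derivatives bounded. -/
def Regular (d : ℕ) (h : ℝ → (Fin d → ℝ) → (Fin d → ℝ) → ℝ) : Prop :=
  ContDiff ℝ (⊤ : ℕ∞) (fun q : ℝ × (Fin d → ℝ) × (Fin d → ℝ) => h q.1 q.2.1 q.2.2) ∧
  (∀ t, IsPeriodic d (h t)) ∧
  (∃ c C : ℝ, 0 < c ∧ ∀ t x v, c ≤ h t x v ∧ h t x v ≤ C) ∧
  (∀ n : ℕ, ∃ C : ℝ, ∀ q : ℝ × (Fin d → ℝ) × (Fin d → ℝ),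
    ‖iteratedFDeriv ℝ n (fun r : ℝ × (Fin d → ℝ) × (Fin d → ℝ) => h r.1 r.2.1 r.2.2) q‖ ≤ C)

/-- Regularity of a time-independent `h`: smooth, periodic in `x`, bounded above and below by
positive constants, with bounded gradient. -/
def RegularStatic (d : ℕ) (h : (Fin d → ℝ) → (Fin d → ℝ) → ℝ) : Prop :=
  ContDiff ℝ (⊤ : ℕ∞) (fun q : (Fin d → ℝ) × (Fin d → ℝ) => h q.1 q.2) ∧
  IsPeriodic d h ∧
  (∃ c C : ℝ, 0 < c ∧ ∀ x v, c ≤ h x v ∧ h x v ≤ C) ∧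
  (∃ C : ℝ, ∀ q : (Fin d → ℝ) × (Fin d → ℝ),
    ‖fderiv ℝ (fun r : (Fin d → ℝ) × (Fin d → ℝ) => h r.1 r.2) q‖ ≤ C)

/-- `h` solves the linear relaxation Boltzmann equation `∂_t h + v·∇_x h = λ(Πh - h)` for `t ≥ 0`. -/
def SolvesLRB (d : ℕ) (lam : ℝ) (h : ℝ → (Fin d → ℝ) → (Fin d → ℝ) → ℝ) : Prop :=
  ∀ t x v, 0 ≤ t →
    deriv (fun s => h s x v) t + dotp d v (gradx d (h t) x v)
      = lam * (proj d (h t) x - h t x v)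

/-- `h` solves the free transport equation `∂_t h + v·∇_x h = 0` for `t ≥ 0`. -/
def SolvesTransport (d : ℕ) (h : ℝ → (Fin d → ℝ) → (Fin d → ℝ) → ℝ) : Prop :=
  ∀ t x v, 0 ≤ t →
    deriv (fun s => h s x v) t + dotp d v (gradx d (h t) x v) = 0

/-- `h` solves the pure relaxation equation `∂_t h = λ(Πh - h)` for `t ≥ 0`. -/
def SolvesCollision (d : ℕ) (lam : ℝ) (h : ℝ → (Fin d → ℝ) → (Fin d → ℝ) → ℝ) : Prop :=
  ∀ t x v, 0 ≤ t →
    deriv (fun s => h s x v) t = lam * (proj d (h t) x - h t x v)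

/-- `h` solves the kinetic Fokker–Planck equation `∂_t h + v·∇_x h = Δ_v h - v·∇_v h` for `t ≥ 0`. -/
def SolvesKFP (d : ℕ) (h : ℝ → (Fin d → ℝ) → (Fin d → ℝ) → ℝ) : Prop :=
  ∀ t x v, 0 ≤ t →
    deriv (fun s => h s x v) t + dotp d v (gradx d (h t) x v)
      = lapv d (h t) x v - dotp d v (gradv d (h t) x v)

open scoped NNReal

section Gaussian

open ProbabilityTheory

variable {d : ℕ}

lemma gauss_nonneg (v : Fin d → ℝ) : 0 ≤ gauss d v := by
  unfold gauss
  positivity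

lemma gauss_eq_prod_gaussianPDFReal (v : Fin d → ℝ) :
    gauss d v = ∏ i, gaussianPDFReal 0 1 (v i) := by
  have hpi : 0 ≤ 2 * π := by positivity
  have hnorm : (2 * π) ^ (-((d : ℝ) / 2)) = (√(2 * π))⁻¹ ^ d := by
    rw [sqrt_eq_rpow, ← rpow_neg hpi, ← rpow_natCast, ← rpow_mul hpi]
    congr 1
    ring
  simp only [gauss, gaussianPDFReal, NNReal.coe_one, mul_one, sub_zero, Finset.prod_mul_distrib,
    Finset.prod_const, Finset.card_univ, Fintype.card_fin, ← exp_sum, hnorm, neg_div,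
    Finset.sum_div, Finset.sum_neg_distrib]

lemma integral_gauss : ∫ v, gauss d v = 1 := by
  simp_rw [gauss_eq_prod_gaussianPDFReal]
  rw [integral_fintype_prod_volume_eq_prod fun (_ : Fin d) => gaussianPDFReal 0 1]
  simp [integral_gaussianPDFReal_eq_one]

lemma integrable_gauss : Integrable (gauss d) :=
  .of_integral_ne_zero (by simp [integral_gauss])

lemma integrable_mul_gaussianPDFReal : Integrable fun x => x * gaussianPDFReal 0 1 x := by
  refine ((integrable_mul_exp_neg_mul_sq (b := 1 / 2) (by norm_num)).const_mul
    (√(2 * π))⁻¹).congr (ae_of_all _ fun x => ?_)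
  simp only [gaussianPDFReal, NNReal.coe_one, mul_one, sub_zero]
  ring_nf

lemma integrable_coord_mul_gauss (i : Fin d) :
    Integrable fun v : Fin d → ℝ => v i * gauss d v := by
  have hprod : Integrable fun v : Fin d → ℝ =>
      ∏ j, (if j = i then v j else 1) * gaussianPDFReal 0 1 (v j) :=
    Integrable.fintype_prod (f := fun j x => (if j = i then x else 1) * gaussianPDFReal 0 1 x)
      fun j => by
        by_cases hj : j = i
        · simpa [hj] using integrable_mul_gaussianPDFReal
        · simpa [hj] using integrable_gaussianPDFReal 0 1
  simpa only [gauss_eq_prod_gaussianPDFReal, Finset.prod_mul_distrib, Finset.prod_ite_eq',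
    Finset.mem_univ, if_true] using hprod

lemma integral_mul_gauss_mem_Icc {g : (Fin d → ℝ) → ℝ} {a b : ℝ}
    (hint : Integrable fun v => g v * gauss d v) (hg : ∀ v, g v ∈ Set.Icc a b) :
    ∫ v, g v * gauss d v ∈ Set.Icc a b := by
  have integral_const_gauss (r : ℝ) : ∫ v, r * gauss d v = r := by
    rw [integral_const_mul, integral_gauss, mul_one]
  rw [Set.mem_Icc, ← integral_const_gauss a, ← integral_const_gauss b]
  exact
    ⟨integral_mono (integrable_gauss.const_mul a) hint fun v =>
        mul_le_mul_of_nonneg_right (hg v).1 (gauss_nonneg v),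
      integral_mono hint (integrable_gauss.const_mul b) fun v =>
        mul_le_mul_of_nonneg_right (hg v).2 (gauss_nonneg v)⟩

lemma lipschitzWith_integral_mul_gauss {E : Type*} [PseudoMetricSpace E]
    {f : E → (Fin d → ℝ) → ℝ} {L : ℝ≥0} (hint : ∀ p, Integrable fun v => f p v * gauss d v)
    (hlip : ∀ v, LipschitzWith L fun p => f p v) :
    LipschitzWith L fun p => ∫ v, f p v * gauss d v :=
  .of_dist_le_mul fun p q => by
    rw [Real.dist_eq, ← integral_sub (hint p) (hint q), abs_le]
    have hint_sub := (hint p).sub (hint q)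
    simp_rw [Pi.sub_def, ← sub_mul] at hint_sub ⊢
    exact integral_mul_gauss_mem_Icc hint_sub fun v => abs_le.1 ((hlip v).dist_le_mul p q)

end Gaussian

section WeightedAverages

variable {E V : Type*} [NormedAddCommGroup E] [NormedSpace ℝ E] [FiniteDimensional ℝ E]
  [TopologicalSpace V] [MeasurableSpace V] [OpensMeasurableSpace V]
  {μ : Measure V} {f : E → V → ℝ} {w : V → ℝ} {L : ℝ≥0} {p : E}

lemma measurable_fderiv_param [MeasurableSpace E] [BorelSpace E] (hf : Continuous ↿f) :
    Measurable fun v => fderiv ℝ (fun q => f q v) p := by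
  have := FiniteDimensional.proper ℝ E
  exact (measurable_fderiv_with_param ℝ (f := fun v q => f q v)
    (hf.comp continuous_swap)).comp measurable_prodMk_right

lemma integrable_fderiv_and_hasFDerivAt_integral_mul [SecondCountableTopology V]
    (hw : Integrable w μ) (hf : Continuous ↿f) (hint : Integrable (fun v => f p v * w v) μ)
    (hlip : ∀ v, LipschitzWith L fun q => f q v)
    (hdiff : ∀ v, DifferentiableAt ℝ (fun q => f q v) p) :
    Integrable (fun v => w v • fderiv ℝ (fun q => f q v) p) μ ∧
      HasFDerivAt (fun q => ∫ v, f q v * w v ∂μ) (∫ v, w v • fderiv ℝ (fun q => f q v) p ∂μ) p := by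
  borelize E
  refine hasFDerivAt_integral_of_dominated_loc_of_lip (F := fun q v => f q v * w v)
    (bound := fun v => L * |w v|) univ_mem (.of_forall fun q => ?_) hint
    (hw.aestronglyMeasurable.smul (measurable_fderiv_param hf).aestronglyMeasurable)
    (ae_of_all _ fun v => ?_) (hw.abs.const_mul _)
    (ae_of_all _ fun v => (hdiff v).hasFDerivAt.mul_const _)
  · have : Continuous (f q) := hf.comp (.prodMk_right q)
    exact this.aestronglyMeasurable.mul hw.aestronglyMeasurable
  · refine (LipschitzWith.of_dist_le_mul fun q r => ?_).lipschitzOnWith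
    simp only [Real.coe_nnabs, Real.dist_eq, ← sub_mul, abs_mul, abs_abs, NNReal.abs_eq,
      mul_right_comm _ |w v|]
    exact mul_le_mul_of_nonneg_right ((hlip v).dist_le_mul q r) (abs_nonneg _)

lemma integrable_and_fderiv_integral_mul_apply [SecondCountableTopology V]
    (hw : Integrable w μ) (hf : Continuous ↿f) (hint : Integrable (fun v => f p v * w v) μ)
    (hlip : ∀ v, LipschitzWith L fun q => f q v)
    (hdiff : ∀ v, DifferentiableAt ℝ (fun q => f q v) p) (e : E) :
    Integrable (fun v => fderiv ℝ (fun q => f q v) p e * w v) μ ∧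
      fderiv ℝ (fun q => ∫ v, f q v * w v ∂μ) p e =
        ∫ v, fderiv ℝ (fun q => f q v) p e * w v ∂μ := by
  obtain ⟨hint', hderiv⟩ :=
    integrable_fderiv_and_hasFDerivAt_integral_mul hw hf hint hlip hdiff
  have hsmul : (fun v => fderiv ℝ (fun q => f q v) p e * w v) =
      fun v => (w v • fderiv ℝ (fun q => f q v) p) e := by
    ext v
    simp [mul_comm]
  rw [hsmul, hderiv.fderiv, ContinuousLinearMap.integral_apply hint']
  exact ⟨hint'.apply_continuousLinearMap e, rfl⟩

end WeightedAverages

section FiniteMeasure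

open scoped Topology

lemma measurable_of_hasDerivAt {X : Type*} [MeasurableSpace X] {g : ℝ → X → ℝ} {g' : X → ℝ}
    {t : ℝ} (hg : ∀ s, Measurable (g s)) (hd : ∀ x, HasDerivAt (fun s => g s x) (g' x) t) :
    Measurable g' :=
  measurable_of_tendsto_metrizable' (𝓝[≠] t)
    (f := fun s x => slope (fun r => g r x) t s)
    (fun s => by simp only [slope_def_field]; fun_prop)
    (tendsto_pi_nhds.2 fun x => (hd x).tendsto_slope)

lemma exists_lipschitzOnWith_Icc_of_hasDerivAt {φ φ' : ℝ → ℝ} {a b : ℝ}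
    (hφ : ∀ r ∈ Set.Icc a b, HasDerivAt φ (φ' r) r) (hφ' : ContinuousOn φ' (Set.Icc a b)) :
    ∃ K : ℝ≥0, LipschitzOnWith K φ (Set.Icc a b) := by
  obtain ⟨K, hK⟩ := isCompact_Icc.exists_bound_of_continuousOn hφ'
  exact ⟨K.toNNReal, (convex_Icc a b).lipschitzOnWith_of_nnnorm_hasDerivWithin_le
    (fun r hr => (hφ r hr).hasDerivWithinAt) fun r hr => NNReal.le_toNNReal_of_coe_le (hK r hr)⟩

variable {X : Type*} [MeasurableSpace X] {ν : Measure X} [IsFiniteMeasure ν] {ρ : ℝ → X → ℝ}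
  {ρ' : X → ℝ} {L : ℝ≥0} {a b t : ℝ}

lemma integrable_and_hasDerivAt_integral_comp {φ φ' : ℝ → ℝ}
    (hφm : Measurable φ) (hφ : ∀ r ∈ Set.Icc a b, HasDerivAt φ (φ' r) r)
    (hφ' : ContinuousOn φ' (Set.Icc a b)) (hρm : ∀ s, Measurable (ρ s))
    (hρ : ∀ s x, ρ s x ∈ Set.Icc a b) (hlip : ∀ x, LipschitzWith L fun s => ρ s x)
    (hderiv : ∀ x, HasDerivAt (fun s => ρ s x) (ρ' x) t) :
    Integrable (fun x => φ' (ρ t x) * ρ' x) ν ∧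
      HasDerivAt (fun s => ∫ x, φ (ρ s x) ∂ν) (∫ x, φ' (ρ t x) * ρ' x ∂ν) t := by
  obtain ⟨K, hK⟩ := exists_lipschitzOnWith_Icc_of_hasDerivAt hφ hφ'
  obtain ⟨B, hB⟩ := isCompact_Icc.exists_bound_of_continuousOn hK.continuousOn
  have hmeas (s : ℝ) : Measurable fun x => φ (ρ s x) := hφm.comp (hρm s)
  have hchain (x : X) : HasDerivAt (fun s => φ (ρ s x)) (φ' (ρ t x) * ρ' x) t :=
    (hφ _ (hρ t x)).comp t (hderiv x)
  refine hasDerivAt_integral_of_dominated_loc_of_lip (F := fun s x => φ (ρ s x))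
    (bound := fun _ => (K * L : ℝ≥0)) univ_mem
    (.of_forall fun s => (hmeas s).aestronglyMeasurable)
    (.of_bound (hmeas t).aestronglyMeasurable B (ae_of_all _ fun x => hB _ (hρ t x)))
    (measurable_of_hasDerivAt hmeas hchain).aestronglyMeasurable (ae_of_all _ fun x => ?_)
    (integrable_const _) (ae_of_all _ hchain)
  rw [Real.nnabs_coe]
  exact hK.comp (hlip x).lipschitzOnWith fun s _ => hρ s x

lemma hasDerivAt_integral_mul_log {m : ℝ} (ha : 0 < a) (hρm : ∀ s, Measurable (ρ s))
    (hρ : ∀ s x, ρ s x ∈ Set.Icc a b) (hlip : ∀ x, LipschitzWith L fun s => ρ s x)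
    (hderiv : ∀ x, HasDerivAt (fun s => ρ s x) (ρ' x) t)
    (hmass : ∀ s, t ≤ s → ∫ x, ρ s x ∂ν = m) :
    HasDerivAt (fun s => ∫ x, ρ s x * log (ρ s x) ∂ν) (∫ x, log (ρ t x) * ρ' x ∂ν) t := by
  have hne : ∀ r ∈ Set.Icc a b, r ≠ 0 := fun r hr => (ha.trans_le hr.1).ne'
  obtain ⟨hint_entropy, hentropy⟩ := integrable_and_hasDerivAt_integral_comp (ν := ν)
    (φ := fun r => r * log r) (φ' := fun r => log r + 1) (by fun_prop)
    (fun r hr => hasDerivAt_mul_log (hne r hr))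
    ((continuousOn_id.log hne).add continuousOn_const) hρm hρ hlip hderiv
  obtain ⟨hint_mass, hmass'⟩ := integrable_and_hasDerivAt_integral_comp (ν := ν)
    measurable_id (fun r _ => hasDerivAt_id r) continuousOn_const hρm hρ hlip hderiv
  -- The mass is constant only after `t`, so its derivative is read off from the right.
  have hmass_zero : ∫ x, 1 * ρ' x ∂ν = 0 :=
    (uniqueDiffWithinAt_Ici t).eq_deriv _ hmass'.hasDerivWithinAt
      ((hasDerivWithinAt_const t _ m).congr hmass (hmass t le_rfl))
  refine hentropy.congr_deriv ?_
  rw [← sub_zero (∫ x, (log (ρ t x) + 1) * ρ' x ∂ν), ← hmass_zero,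
    ← integral_sub hint_entropy hint_mass]
  simp_rw [← sub_mul, add_sub_cancel_right]

end FiniteMeasure

section Kinetic

/-- The transport derivative `∂_t h + v·∇_x h`, whose value a kinetic equation prescribes. -/
def transport (d : ℕ) (h : ℝ → (Fin d → ℝ) → (Fin d → ℝ) → ℝ) (t : ℝ) (x v : Fin d → ℝ) : ℝ :=
  deriv (fun s => h s x v) t + dotp d v (gradx d (h t) x v)

lemma lipschitzWith_slice_left {α β γ δ : Type*} [PseudoEMetricSpace α] [PseudoEMetricSpace β]
    [PseudoEMetricSpace γ] [PseudoEMetricSpace δ] {L : ℝ≥0} {f : α × β × γ → δ}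
    (hf : LipschitzWith L f) (y : β) (z : γ) : LipschitzWith L fun x => f (x, y, z) := by
  simpa using! hf.comp (.prodMk_right (y, z))

lemma lipschitzWith_slice_middle {α β γ δ : Type*} [PseudoEMetricSpace α]
    [PseudoEMetricSpace β] [PseudoEMetricSpace γ] [PseudoEMetricSpace δ] {L : ℝ≥0}
    {f : α × β × γ → δ} (hf : LipschitzWith L f) (x : α) (z : γ) :
    LipschitzWith L fun y => f (x, y, z) := by
  simpa using! hf.comp ((LipschitzWith.prodMk_left x).comp (.prodMk_right z))

lemma integrable_mul_of_mem_Icc {α : Type*} [MeasurableSpace α] {μ : Measure α} {g w : α → ℝ}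
    {a b : ℝ} (hg : AEStronglyMeasurable g μ) (hab : ∀ v, g v ∈ Set.Icc a b)
    (hw : Integrable w μ) : Integrable (fun v => g v * w v) μ :=
  hw.bdd_mul hg (ae_of_all _ fun v => abs_le_max_abs_abs (hab v).1 (hab v).2)

variable {d : ℕ} {h : ℝ → (Fin d → ℝ) → (Fin d → ℝ) → ℝ} {L : ℝ≥0} {a b : ℝ}

lemma integrable_slice_mul {w : (Fin d → ℝ) → ℝ} (hcont : Continuous ↿h)
    (hh : ∀ t x v, h t x v ∈ Set.Icc a b) (hw : Integrable w) (t : ℝ) (x : Fin d → ℝ) :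
    Integrable fun v => h t x v * w v :=
  have hslice : Continuous (h t x) :=
    hcont.comp (f := fun v : Fin d → ℝ => (t, x, v)) (by fun_prop)
  integrable_mul_of_mem_Icc hslice.aestronglyMeasurable (hh t x) hw

lemma integrable_and_hasDerivAt_proj (hdiff : Differentiable ℝ ↿h) (hlip : LipschitzWith L ↿h)
    (hh : ∀ t x v, h t x v ∈ Set.Icc a b) (t : ℝ) (x : Fin d → ℝ) :
    Integrable (fun v => deriv (fun s => h s x v) t * gauss d v) ∧
      HasDerivAt (fun s => proj d (h s) x) (∫ v, deriv (fun s => h s x v) t * gauss d v) t := by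
  have hcont : Continuous ↿fun s v => h s x v :=
    hdiff.continuous.comp (f := fun q : ℝ × (Fin d → ℝ) => (q.1, x, q.2)) (by fun_prop)
  have hint := integrable_slice_mul hdiff.continuous hh integrable_gauss t x
  have htime (v) : DifferentiableAt ℝ (fun s => h s x v) t :=
    (hdiff _).comp (f := fun s : ℝ => (s, x, v)) t (by fun_prop)
  have hlip' := lipschitzWith_slice_left hlip x
  obtain ⟨-, hproj⟩ :=
    integrable_fderiv_and_hasFDerivAt_integral_mul integrable_gauss hcont hint hlip' htime
  obtain ⟨hint', hderiv⟩ :=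
    integrable_and_fderiv_integral_mul_apply integrable_gauss hcont hint hlip' htime 1
  simp_rw [fderiv_apply_one_eq_deriv] at hint' hderiv
  exact ⟨hint', hderiv ▸ hproj.differentiableAt.hasDerivAt⟩

lemma integrable_and_divU_eq (hdiff : Differentiable ℝ ↿h) (hlip : LipschitzWith L ↿h)
    (hh : ∀ t x v, h t x v ∈ Set.Icc a b) (t : ℝ) (x : Fin d → ℝ) :
    Integrable (fun v => dotp d v (gradx d (h t) x v) * gauss d v) ∧
      divU d (h t) x = ∫ v, dotp d v (gradx d (h t) x v) * gauss d v := by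
  have hcont : Continuous ↿(h t) :=
    hdiff.continuous.comp (f := fun q : (Fin d → ℝ) × (Fin d → ℝ) => (t, q.1, q.2)) (by fun_prop)
  have hspace (v) : DifferentiableAt ℝ (fun y => h t y v) x :=
    (hdiff _).comp (f := fun y : Fin d → ℝ => (t, y, v)) x (by fun_prop)
  have hpartial (i : Fin d) := integrable_and_fderiv_integral_mul_apply
    (integrable_coord_mul_gauss i) hcont
    (integrable_slice_mul hdiff.continuous hh (integrable_coord_mul_gauss i) t x)
    (lipschitzWith_slice_middle hlip t) hspace (Pi.single i 1)
  have hdotp (v : Fin d → ℝ) : dotp d v (gradx d (h t) x v) * gauss d v =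
      ∑ i, fderiv ℝ (fun y => h t y v) x (Pi.single i 1) * (v i * gauss d v) := by
    simp only [dotp, gradx, Finset.sum_mul, mul_left_comm, mul_assoc]
  have hUvec (i : Fin d) (y : Fin d → ℝ) :
      Uvec d (h t) y i = ∫ v, h t y v * (v i * gauss d v) := by
    simp only [Uvec, mul_left_comm, mul_assoc]
  simp_rw [hdotp, divU, hUvec]
  exact ⟨integrable_finsetSum _ fun i _ => (hpartial i).1,
    (Finset.sum_congr rfl fun i _ => (hpartial i).2).trans
      (integral_finsetSum _ fun i _ => (hpartial i).1).symm⟩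

lemma hasDerivAt_proj (hdiff : Differentiable ℝ ↿h) (hlip : LipschitzWith L ↿h)
    (hh : ∀ t x v, h t x v ∈ Set.Icc a b) (t : ℝ) (x : Fin d → ℝ) :
    HasDerivAt (fun s => proj d (h s) x) (proj d (transport d h t) x - divU d (h t) x) t := by
  obtain ⟨hint_time, hderiv⟩ := integrable_and_hasDerivAt_proj hdiff hlip hh t x
  obtain ⟨hint_space, hdiv⟩ := integrable_and_divU_eq hdiff hlip hh t x
  refine hderiv.congr_deriv ?_
  simp only [proj, transport, add_mul]
  rw [hdiv, integral_add hint_time hint_space, add_sub_cancel_right]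

lemma lipschitzWith_proj_left (hlip : LipschitzWith L ↿h)
    (hh : ∀ t x v, h t x v ∈ Set.Icc a b) (x : Fin d → ℝ) :
    LipschitzWith L fun s => proj d (h s) x :=
  lipschitzWith_integral_mul_gauss
    (fun s => integrable_slice_mul hlip.continuous hh integrable_gauss s x)
    (lipschitzWith_slice_left hlip x)

lemma measurable_proj (hlip : LipschitzWith L ↿h) (hh : ∀ t x v, h t x v ∈ Set.Icc a b) (t : ℝ) :
    Measurable (proj d (h t)) :=
  (lipschitzWith_integral_mul_gauss
    (fun x => integrable_slice_mul hlip.continuous hh integrable_gauss t x)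
    (lipschitzWith_slice_middle hlip t)).continuous.measurable

instance isFiniteMeasure_restrict_cube : IsFiniteMeasure (volume.restrict (cube d)) :=
  ⟨by simpa only [cube, Measure.restrict_apply_univ] using isCompact_Icc.measure_lt_top⟩

lemma SolvesLRB.proj_transport_eq_zero {lam t : ℝ} (hpde : SolvesLRB d lam h) (ht : 0 ≤ t)
    {x : Fin d → ℝ} (hint : Integrable fun v => h t x v * gauss d v) :
    proj d (transport d h t) x = 0 := by
  have hrelax (v : Fin d → ℝ) : transport d h t x v * gauss d v =
      lam * (proj d (h t) x * gauss d v - h t x v * gauss d v) := by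
    rw [transport, hpde t x v ht]
    ring
  rw [proj]
  simp_rw [hrelax]
  rw [integral_const_mul, integral_sub (integrable_gauss.const_mul _) hint, integral_const_mul,
    integral_gauss, ← proj, mul_one, sub_self, mul_zero]

lemma Regular.differentiable (hreg : Regular d h) : Differentiable ℝ ↿h :=
  hreg.1.differentiable (by simp)

lemma Regular.exists_lipschitzWith (hreg : Regular d h) : ∃ L, LipschitzWith L ↿h := by
  obtain ⟨C, hC⟩ := hreg.2.2.2 1
  simp_rw [norm_iteratedFDeriv_one] at hC
  exact ⟨C.toNNReal, lipschitzWith_of_nnnorm_fderiv_le hreg.differentiable fun q =>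
    NNReal.le_toNNReal_of_coe_le (hC q)⟩

lemma Regular.integrable_mul_gauss (hreg : Regular d h) (t : ℝ) (x : Fin d → ℝ) :
    Integrable fun v => h t x v * gauss d v := by
  obtain ⟨c, C, -, hh⟩ := hreg.2.2.1
  exact integrable_slice_mul hreg.differentiable.continuous hh integrable_gauss t x

theorem projected_entropy_derivative_general {ν : Measure (Fin d → ℝ)} [IsFiniteMeasure ν]
    {t m : ℝ} (hdiff : Differentiable ℝ ↿h) (hlip : ∃ L, LipschitzWith L ↿h)
    (hbound : ∃ c C : ℝ, 0 < c ∧ ∀ t x v, c ≤ h t x v ∧ h t x v ≤ C)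
    (hflow : ∀ x, proj d (transport d h t) x = 0)
    (hmass : ∀ s, t ≤ s → ∫ x, proj d (h s) x ∂ν = m) :
    HasDerivAt (fun s => ∫ x, proj d (h s) x * log (proj d (h s) x) ∂ν)
      (-∫ x, log (proj d (h t) x) * divU d (h t) x ∂ν) t := by
  obtain ⟨L, hlip⟩ := hlip
  obtain ⟨a, b, ha, hh⟩ := hbound
  have hcontinuity (x) : HasDerivAt (fun s => proj d (h s) x) (-divU d (h t) x) t := by
    simpa only [hflow, zero_sub] using hasDerivAt_proj hdiff hlip hh t x
  have hproj_mem (s x) : proj d (h s) x ∈ Set.Icc a b :=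
    integral_mul_gauss_mem_Icc (integrable_slice_mul hlip.continuous hh integrable_gauss s x)
      (hh s x)
  simpa only [mul_neg, integral_neg] using hasDerivAt_integral_mul_log ha
    (measurable_proj hlip hh) hproj_mem (lipschitzWith_proj_left hlip hh) hcontinuity hmass

end Kinetic

/-- Derivative of the projected entropy along the flow of the linear relaxation
Boltzmann equation: `(d/dt) ∫ Πh_t log Πh_t dx = - ∫ log(Πh_t) ∇_x · U_t dx`. -/
theorem projected_entropy_derivative
    (d : ℕ) (hd : 1 ≤ d) (lam : ℝ) (hlam : 0 < lam)
    (h : ℝ → (Fin d → ℝ) → (Fin d → ℝ) → ℝ)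
    (hreg : Regular d h)
    (hmass : ∀ t, 0 ≤ t → intMu d (h t) = 1)
    (hpde : SolvesLRB d lam h) :
    ∀ t : ℝ, 0 ≤ t →
      HasDerivAt (fun s => HPi d (h s))
        (-∫ x in cube d, Real.log (proj d (h t) x) * divU d (h t) x) t :=
  fun _ ht => projected_entropy_derivative_general hreg.differentiable hreg.exists_lipschitzWith
    hreg.2.2.1 (fun x => hpde.proj_transport_eq_zero ht (hreg.integrable_mul_gauss _ x))
    fun s hs => hmass s (ht.trans hs)

end
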